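/- There exists ε ∈ (0,1) such that for every even n ≥ 2, Cval(L^n) ≥ 1/4 − ε^n. That is, for every contextual hidden variable assignment f on the maximal isotropic subspaces of (ZMod 2)^{2n}, the average over one-dimensional isotropic subspaces w of m_w(f)(1 − m_w(f)) is at least 1/4 − ε^n. -/

import Mathlib

open Finset

abbrev F2 := ZMod 2
/-- `F2^{2n}`, split into the first and last `n` coordinates. -/
abbrev PV (n : ℕ) := (Fin n → F2) × (Fin n → F2)

/-- Symplectic product on `F2^{2n}`: zero iff `a₁·b₂ = a₂·b₁`. -/
def symp {n : ℕ} (a b : PV n) : F2 :=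
  (∑ i, a.1 i * b.2 i) + (∑ i, a.2 i * b.1 i)

/-- A subspace is isotropic if the symplectic product vanishes on it. -/
def IsIsotropic {n : ℕ} (S : Submodule F2 (PV n)) : Prop :=
  ∀ x ∈ S, ∀ y ∈ S, symp x y = 0

/-- `Lset n k` = `L^n_k`, the set of `k`-dimensional isotropic subspaces of `F2^{2n}`. -/
def Lset (n k : ℕ) : Set (Submodule F2 (PV n)) :=
  {S | IsIsotropic S ∧ Module.finrank F2 S = k}

/-- Integer lift of a vector over `F2`, with values in `{0,1} ⊆ ℤ`. -/
def liftZ {n : ℕ} (v : Fin n → F2) : Fin n → ℤ := fun i => ((v i).val : ℤ)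

def dotZ {n : ℕ} (a b : Fin n → ℤ) : ℤ := ∑ i, a i * b i

/-- The phase `i^{x̂₁·x̂₂} · i^{ŷ₁·ŷ₂} · i^{−((x+y)^^₁·(x+y)^^₂)} · (−1)^{x̂₂·ŷ₁}`. -/
noncomputable def phase {n : ℕ} (x y : PV n) : ℂ :=
  Complex.I ^ (dotZ (liftZ x.1) (liftZ x.2)) *
  Complex.I ^ (dotZ (liftZ y.1) (liftZ y.2)) *
  Complex.I ^ (-(dotZ (liftZ (x + y).1) (liftZ (x + y).2))) *
  (-1 : ℂ) ^ (dotZ (liftZ x.2) (liftZ y.1))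

/-- `w(x,y) ∈ {0,1} ⊆ F2`: zero iff the phase equals `1`. -/
noncomputable def wght {n : ℕ} (x y : PV n) : F2 :=
  if phase x y = 1 then 0 else 1

/-- An outcome of an isotropic subspace `S` is `f : S → F2` with
`f(x+y) = f(x)+f(y)+w(x,y)`. -/
def IsOutcome {n : ℕ} (S : Submodule F2 (PV n)) (f : S → F2) : Prop :=
  ∀ x y : S, f (x + y) = f x + f y + wght (x : PV n) (y : PV n)

/-- Two outcomes are consistent if they agree on the intersection of their domains. -/
def ConsistentOn {n : ℕ} {S₁ S₂ : Submodule F2 (PV n)} (f₁ : S₁ → F2) (f₂ : S₂ → F2) : Prop :=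
  ∀ v (h1 : v ∈ S₁) (h2 : v ∈ S₂), f₁ ⟨v, h1⟩ = f₂ ⟨v, h2⟩

/-- Given a contextual hidden variable assignment `f`, a 1-dimensional isotropic `w`, and a
value `c : F2`, the number of maximal isotropic subspaces `x ⊇ w` whose assigned outcome gives
the nonzero vector of `w` the value `c`. -/
noncomputable def outcomeCount (n : ℕ) (f : (S : Submodule F2 (PV n)) → (S → F2))
    (w : Submodule F2 (PV n)) (c : F2) : ℕ :=
  Nat.card {x : Submodule F2 (PV n) |
    x ∈ Lset n n ∧ ∃ (h : w ≤ x), ∃ v, ∃ (hv : v ∈ w), v ≠ 0 ∧ f x ⟨v, h hv⟩ = c}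

/-- `m_w(f)`: the fraction of maximal isotropic subspaces above `w` assigning the minority
value to the nonzero vector of `w`. -/
noncomputable def minorityFrac (n : ℕ) (f : (S : Submodule F2 (PV n)) → (S → F2))
    (w : Submodule F2 (PV n)) : ℝ :=
  (min (outcomeCount n f w 0) (outcomeCount n f w 1) : ℝ) /
    ((outcomeCount n f w 0 : ℝ) + (outcomeCount n f w 1 : ℝ))

/-!
Let `b v` be the average of the signs `(-1) ^ f_x(v)` over the maximal isotropic subspaces `x ∋ v`.
Then `m_w (1 - m_w) = (1 - b v ^ 2) / 4` for the line `w` spanned by `v`, so it suffices that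
`∑ v, b v ^ 2` is exponentially small compared with `4 ^ n`. Up to a factor this sum is the average
over `x` of `S_x = ∑ v ∈ x, b v * (-1) ^ f_x(v)`, and we bound the average of `S_x ^ 4`.

All outcomes share the cocycle `w(x, y)`, so the Cauchy–Schwarz step for the Gowers `U²` norm
eliminates `f_x` and bounds `S_x ^ 4` by `2 ^ n` times a sum over `(u, a, c) ∈ x³` of a product of
correlations of `b` which does not depend on `f`. Every linearly independent isotropic triple lies
in the same number of Lagrangian subspaces, so the average over `x` becomes a sum over isotropic
triples of the whole space. Writing the indicator of `⟨a, c⟩ = 0` as `(1 + (-1) ^ ⟨a, c⟩) / 2`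
splits it in two: the first half is the norm of a twisted convolution, controlled by
submultiplicativity of the Frobenius norm on products of Weyl operators, and the second half is
controlled by Lindsey's lemma for the symplectic form.
-/

/-! ### Counting Lagrangian subspaces -/

section Lagrangian

open LinearMap.BilinForm Module

variable {K V : Type*} [Field K] [AddCommGroup V] [Module K V] {B : LinearMap.BilinForm K V}

/-- A Lagrangian (maximal isotropic) subspace of a space with a nondegenerate alternating form,
encoded as a subspace that is its own orthogonal complement. -/
def IsLagrangian (B : LinearMap.BilinForm K V) (x : Submodule K V) : Prop :=
  B.orthogonal x = x

theorem span_le_orthogonal_span {s : Set V} (hs : ∀ v ∈ s, ∀ w ∈ s, B v w = 0) :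
    Submodule.span K s ≤ B.orthogonal (Submodule.span K s) := by
  refine Submodule.span_le.2 fun w hw v hv ↦ ?_
  have hker : Submodule.span K s ≤ LinearMap.ker (B.flip w) :=
    Submodule.span_le.2 fun v hv ↦ hs v hv w hw
  exact hker hv

theorem sup_span_singleton_le_orthogonal (hB : B.IsAlt) {W : Submodule K V}
    (hW : W ≤ B.orthogonal W) {v : V} (hv : v ∈ B.orthogonal W) :
    W ⊔ Submodule.span K {v} ≤ B.orthogonal (W ⊔ Submodule.span K {v}) := by
  rw [← Submodule.span_eq W, ← Submodule.span_union]
  refine span_le_orthogonal_span ?_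
  rintro a (ha | rfl) b (hb | rfl)
  · exact hW hb a ha
  · exact hv a ha
  · exact hB.isRefl _ _ (hv b hb)
  · exact hB _

theorem finrank_sup_span_singleton_of_notMem [FiniteDimensional K V] {W : Submodule K V} {v : V}
    (hv : v ∉ W) : finrank K ↥(W ⊔ Submodule.span K {v}) = finrank K W + 1 := by
  have hv0 : v ≠ 0 := fun h ↦ hv (h ▸ W.zero_mem)
  have hinf : W ⊓ Submodule.span K {v} = ⊥ :=
    disjoint_iff.1 ((Submodule.disjoint_span_singleton' hv0).2 hv)
  have h := Submodule.finrank_sup_add_finrank_inf_eq W (Submodule.span K {v})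
  rwa [hinf, finrank_bot, add_zero, finrank_span_singleton hv0] at h

theorem isLagrangian_iff [FiniteDimensional K V] (hB : B.Nondegenerate) {x : Submodule K V} :
    IsLagrangian B x ↔ x ≤ B.orthogonal x ∧ 2 * finrank K x = finrank K V := by
  have hx := finrank_orthogonal hB x
  have hle := Submodule.finrank_le x
  refine ⟨fun h ↦ ⟨h.ge, ?_⟩, fun h ↦ (Submodule.eq_of_le_of_finrank_eq h.1 ?_).symm⟩
  · rw [show B.orthogonal x = x from h] at hx
    lia
  · have := h.2
    lia

variable [Finite V]

/-- The finite set of Lagrangian subspaces containing a given subspace `W`. -/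
noncomputable def lagrangiansAbove (B : LinearMap.BilinForm K V) (W : Submodule K V) :
    Finset (Submodule K V) :=
  (Set.toFinite {x | IsLagrangian B x ∧ W ≤ x}).toFinset

@[simp]
theorem mem_lagrangiansAbove {W x : Submodule K V} :
    x ∈ lagrangiansAbove B W ↔ IsLagrangian B x ∧ W ≤ x := by
  simp [lagrangiansAbove]

/-- The number of Lagrangian subspaces of a symplectic space of dimension `2 * m` over a field
with `q` elements. -/
def numLagrangians (q m : ℕ) : ℕ :=
  ∏ i ∈ range m, (q ^ (i + 1) + 1)

theorem numLagrangians_succ (q m : ℕ) :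
    numLagrangians q (m + 1) = (q ^ (m + 1) + 1) * numLagrangians q m := by
  rw [numLagrangians, prod_range_succ, mul_comm, numLagrangians]

theorem pow_succ_mul_numLagrangians_le (q m : ℕ) :
    q ^ (m + 1) * numLagrangians q m ≤ numLagrangians q (m + 1) := by
  rw [numLagrangians_succ]
  gcongr
  exact Nat.le_succ _

theorem numLagrangians_pos (q m : ℕ) : 0 < numLagrangians q m :=
  prod_pos fun _ _ ↦ Nat.succ_pos _

theorem ncard_sdiff_of_le {W x : Submodule K V} (h : W ≤ x) :
    ((x : Set V) \ W).ncard = Nat.card K ^ finrank K x - Nat.card K ^ finrank K W := by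
  rw [Set.ncard_sdiff h, ← Nat.card_coe_set_eq, ← Nat.card_coe_set_eq,
    SetLike.coe_sort_coe, SetLike.coe_sort_coe, natCard_eq_pow_finrank (K := K) (V := x),
    natCard_eq_pow_finrank (K := K) (V := W)]

theorem sum_ncard_sdiff_lagrangiansAbove (W : Submodule K V) :
    ∑ x ∈ lagrangiansAbove B W, ((x : Set V) \ W).ncard =
      ∑ v ∈ (Set.toFinite ((B.orthogonal W : Set V) \ W)).toFinset,
        #(lagrangiansAbove B (W ⊔ Submodule.span K {v})) := by
  classical
  convert sum_card_bipartiteAbove_eq_sum_card_bipartiteBelow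
    (fun (x : Submodule K V) (v : V) ↦ v ∈ x) using 2 with x hx v _
  · obtain ⟨hx, hWx⟩ := mem_lagrangiansAbove.1 hx
    have hxW : x ≤ B.orthogonal W := hx.ge.trans (orthogonal_le hWx)
    rw [← Set.ncard_coe_finset]
    congr 1
    ext v
    simp only [bipartiteAbove, Set.mem_sdiff, SetLike.mem_coe, coe_filter, Set.Finite.mem_toFinset,
      Set.mem_ofPred_eq]
    exact ⟨fun ⟨hv, hvW⟩ ↦ ⟨⟨hxW hv, hvW⟩, hv⟩, fun ⟨⟨_, hvW⟩, hv⟩ ↦ ⟨hv, hvW⟩⟩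
  · congr 1
    ext x
    simp only [bipartiteBelow, mem_filter, mem_lagrangiansAbove, sup_le_iff,
      Submodule.span_singleton_le_iff_mem, and_assoc]

theorem pow_sub_pow_eq_mul_pow_sub_pow {q : ℕ} (hq : 0 < q) (k m : ℕ) :
    q ^ (k + 2 * m) - q ^ k = (q ^ m + 1) * (q ^ (k + m) - q ^ k) := by
  have h₁ : q ^ k ≤ q ^ (k + m) := Nat.pow_le_pow_right hq (by lia)
  have h₂ : q ^ k ≤ q ^ (k + 2 * m) := Nat.pow_le_pow_right hq (by lia)
  zify [h₁, h₂]
  ring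

theorem card_lagrangiansAbove_of_sup_span_singleton [Finite K] (hnd : B.Nondegenerate) {m N : ℕ}
    {W : Submodule K V} (hW : W ≤ B.orthogonal W)
    (hdim : finrank K V = 2 * (finrank K W + (m + 1)))
    (hN : ∀ v ∈ B.orthogonal W, v ∉ W → #(lagrangiansAbove B (W ⊔ Submodule.span K {v})) = N) :
    #(lagrangiansAbove B W) = (Nat.card K ^ (m + 1) + 1) * N := by
  set q := Nat.card K
  set k := finrank K W
  have hq : 1 < q := Finite.one_lt_card
  have hcount := sum_ncard_sdiff_lagrangiansAbove (B := B) W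
  have hfiber : ∀ x ∈ lagrangiansAbove B W,
      ((x : Set V) \ W).ncard = q ^ (k + (m + 1)) - q ^ k := by
    intro x hx
    obtain ⟨hx, hWx⟩ := mem_lagrangiansAbove.1 hx
    have := ((isLagrangian_iff hnd).1 hx).2
    rw [ncard_sdiff_of_le hWx, show finrank K x = k + (m + 1) by lia]
  have hfiber' : ∀ v ∈ (Set.toFinite ((B.orthogonal W : Set V) \ W)).toFinset,
      #(lagrangiansAbove B (W ⊔ Submodule.span K {v})) = N := by
    intro v hv
    obtain ⟨hv, hvW⟩ := (Set.Finite.mem_toFinset _).1 hv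
    exact hN v hv hvW
  have horth : finrank K (B.orthogonal W) = k + 2 * (m + 1) := by
    rw [finrank_orthogonal hnd]
    lia
  rw [sum_const_nat hfiber, sum_const_nat hfiber', ← Set.ncard_eq_toFinset_card,
    ncard_sdiff_of_le hW, horth, pow_sub_pow_eq_mul_pow_sub_pow hq.pos] at hcount
  have hpos : 0 < q ^ (k + (m + 1)) - q ^ k :=
    Nat.sub_pos_of_lt (Nat.pow_lt_pow_right hq (by lia))
  exact Nat.eq_of_mul_eq_mul_right hpos (hcount.trans (mul_right_comm _ _ _))

theorem card_lagrangiansAbove [Finite K] (hB : B.IsAlt) (hnd : B.Nondegenerate) {m : ℕ}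
    {W : Submodule K V} (hW : W ≤ B.orthogonal W) (hdim : finrank K V = 2 * (finrank K W + m)) :
    #(lagrangiansAbove B W) = numLagrangians (Nat.card K) m := by
  induction m generalizing W with
  | zero =>
    rw [numLagrangians, prod_range_zero, card_eq_one]
    refine ⟨W, ext fun x ↦ ?_⟩
    rw [mem_lagrangiansAbove, mem_singleton]
    refine ⟨fun ⟨hx, hWx⟩ ↦ ?_, ?_⟩
    · have := ((isLagrangian_iff hnd).1 hx).2
      exact (Submodule.eq_of_le_of_finrank_eq hWx (by lia)).symm
    · rintro rfl
      exact ⟨(isLagrangian_iff hnd).2 ⟨hW, hdim.symm⟩, le_rfl⟩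
  | succ m ih =>
    rw [numLagrangians_succ]
    refine card_lagrangiansAbove_of_sup_span_singleton hnd hW hdim fun v hv hvW ↦ ?_
    refine ih (sup_span_singleton_le_orthogonal hB hW hv) ?_
    rw [finrank_sup_span_singleton_of_notMem hvW]
    lia

theorem card_lagrangiansAbove_span_range [Finite K] (hB : B.IsAlt) (hnd : B.Nondegenerate)
    {k m : ℕ} (hdim : finrank K V = 2 * (k + m)) {p : Fin k → V} (hp : LinearIndependent K p)
    (hiso : ∀ i j, B (p i) (p j) = 0) :
    #(lagrangiansAbove B (Submodule.span K (Set.range p))) = numLagrangians (Nat.card K) m := by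
  refine card_lagrangiansAbove hB hnd (span_le_orthogonal_span ?_) ?_
  · rintro _ ⟨i, rfl⟩ _ ⟨j, rfl⟩
    exact hiso i j
  · rw [finrank_span_eq_card hp, Fintype.card_fin, hdim]

theorem card_lagrangiansAbove_bot [Finite K] (hB : B.IsAlt) (hnd : B.Nondegenerate) {m : ℕ}
    (hdim : finrank K V = 2 * m) :
    #(lagrangiansAbove B ⊥) = numLagrangians (Nat.card K) m :=
  card_lagrangiansAbove hB hnd bot_le (by rw [finrank_bot, hdim, zero_add])

theorem card_lagrangiansAbove_span_singleton [Finite K] (hB : B.IsAlt) (hnd : B.Nondegenerate)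
    {m : ℕ} (hdim : finrank K V = 2 * (m + 1)) {v : V} (hv : v ≠ 0) :
    #(lagrangiansAbove B (Submodule.span K {v})) = numLagrangians (Nat.card K) m := by
  refine card_lagrangiansAbove hB hnd (span_le_orthogonal_span ?_) ?_
  · rintro _ rfl _ rfl
    exact hB _
  · rw [finrank_span_singleton hv, hdim, add_comm]

end Lagrangian

section Tuples

open Module

theorem sum_fin_succ_pi {α M : Type*} [Fintype α] [AddCommMonoid M] {k : ℕ}
    (g : (Fin (k + 1) → α) → M) :
    ∑ p, g p = ∑ v : α, ∑ p : Fin k → α, g (Fin.cons v p) := by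
  rw [← (Fin.consEquiv fun _ ↦ α).sum_comp g, Fintype.sum_prod_type]
  rfl

theorem sum_fin_three_pi {α M : Type*} [Fintype α] [AddCommMonoid M] (g : (Fin 3 → α) → M) :
    ∑ p, g p = ∑ a, ∑ b, ∑ c, g ![a, b, c] := by
  simp only [sum_fin_succ_pi, Fintype.sum_unique, Matrix.vecCons]
  congr!

variable {K V : Type*} [Field K] [AddCommGroup V] [Module K V]

theorem linearIndependent_coe_iff {k : ℕ} {x : Submodule K V} {p : Fin k → x} :
    LinearIndependent K (fun i ↦ (p i : V)) ↔ LinearIndependent K p :=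
  x.subtype.linearIndependent_iff x.ker_subtype

variable [Fintype V]

open Classical in
/-- The finite set of linearly dependent `k`-tuples of vectors. -/
noncomputable def dependentTuples (K V : Type*) [Field K] [AddCommGroup V] [Module K V]
    [Fintype V] (k : ℕ) : Finset (Fin k → V) :=
  {p | ¬ LinearIndependent K p}

@[simp]
theorem mem_dependentTuples {k : ℕ} {p : Fin k → V} :
    p ∈ dependentTuples K V k ↔ ¬ LinearIndependent K p := by
  simp [dependentTuples]

open Classical in
theorem card_span_range_le [Finite K] {k : ℕ} (p : Fin k → V) :
    #{v | v ∈ Submodule.span K (Set.range p)} ≤ Nat.card K ^ k := by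
  rw [← Fintype.card_subtype, ← Nat.card_eq_fintype_card]
  exact (natCard_eq_pow_finrank (K := K)).trans_le <|
    Nat.pow_le_pow_right Nat.card_pos <| by
      simpa [Set.finrank] using finrank_range_le_card (R := K) p

open Classical in
theorem card_dependentTuples_succ_le [Finite K] (k : ℕ) :
    #(dependentTuples K V (k + 1)) ≤
      Fintype.card V * #(dependentTuples K V k) + Fintype.card V ^ k * Nat.card K ^ k := by
  calc #(dependentTuples K V (k + 1))
      = ∑ p : Fin k → V, #{v | ¬ LinearIndependent K (Fin.cons v p : Fin (k + 1) → V)} := by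
        simp only [dependentTuples, card_filter]
        rw [sum_fin_succ_pi, sum_comm]
    _ ≤ ∑ p : Fin k → V, ((if p ∈ dependentTuples K V k then Fintype.card V else 0) +
          Nat.card K ^ k) := by
        refine sum_le_sum fun p _ ↦ ?_
        split_ifs with hp
        · exact (card_le_univ _).trans (Nat.le_add_right _ _)
        · rw [zero_add]
          refine (card_le_card fun v ↦ ?_).trans (card_span_range_le (K := K) p)
          rw [mem_dependentTuples, not_not] at hp
          simp [linearIndependent_finCons, hp]
    _ = _ := by
        simp only [sum_add_distrib, sum_ite_mem, univ_inter, sum_const, card_univ,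
          Fintype.card_pi_const, smul_eq_mul, mul_comm]

theorem card_dependentTuples_le [Finite K] (k : ℕ) :
    #(dependentTuples K V (k + 1)) ≤
      (∑ i ∈ range (k + 1), Nat.card K ^ i) * Fintype.card V ^ k := by
  induction k with
  | zero => simpa [dependentTuples] using card_dependentTuples_succ_le (K := K) (V := V) 0
  | succ k ih =>
    calc #(dependentTuples K V (k + 2))
        ≤ Fintype.card V * #(dependentTuples K V (k + 1)) +
            Fintype.card V ^ (k + 1) * Nat.card K ^ (k + 1) := card_dependentTuples_succ_le _
      _ ≤ Fintype.card V * ((∑ i ∈ range (k + 1), Nat.card K ^ i) * Fintype.card V ^ k) +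
            Fintype.card V ^ (k + 1) * Nat.card K ^ (k + 1) := by gcongr
      _ = _ := by
          rw [sum_range_succ _ (k + 1)]
          ring

open Classical in
theorem sum_tuples_subtype {k : ℕ} (x : Submodule K V) (g : (Fin k → V) → ℝ) :
    ∑ p : Fin k → x, g (fun i ↦ p i) = ∑ p with ∀ i, p i ∈ x, g p := by
  rw [sum_subtype (p := fun p : Fin k → V ↦ ∀ i, p i ∈ x) _ (by simp)]
  exact ((Equiv.subtypePiEquivPi (p := fun (_ : Fin k) v ↦ v ∈ x)).sum_comp
    fun p : Fin k → x ↦ g fun i ↦ p i).symm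

variable {B : LinearMap.BilinForm K V}

open Classical in
theorem sum_lagrangians_sum_tuples {k : ℕ} (g : (Fin k → V) → ℝ) :
    ∑ x ∈ lagrangiansAbove B ⊥, ∑ p : Fin k → x, g (fun i ↦ p i) =
      ∑ p, #(lagrangiansAbove B (Submodule.span K (Set.range p))) * g p := by
  simp only [sum_tuples_subtype, sum_filter]
  rw [sum_comm]
  refine sum_congr rfl fun p _ ↦ ?_
  rw [← sum_filter, sum_const, nsmul_eq_mul]
  congr 3
  ext x
  simp [Submodule.span_le, Set.range_subset_iff]

open Classical in
/-- Up to the degenerate contribution of the dependent tuples, every tuple on which `g` is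
supported lies in the same number of Lagrangian subspaces. -/
theorem sum_lagrangians_sum_tuples_le [Finite K] (hB : B.IsAlt) (hnd : B.Nondegenerate)
    {k m : ℕ} (hdim : finrank K V = 2 * (k + m)) {g : (Fin k → V) → ℝ} (hg : ∀ p, |g p| ≤ 1)
    (hiso : ∀ p, g p ≠ 0 → ∀ i j, B (p i) (p j) = 0) :
    ∑ x ∈ lagrangiansAbove B ⊥, ∑ p : Fin k → x, g (fun i ↦ p i) ≤
      numLagrangians (Nat.card K) m * (∑ p, g p + #(dependentTuples K V k)) +
        ∑ x ∈ lagrangiansAbove B ⊥, (#(dependentTuples K x k) : ℝ) := by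
  set N := numLagrangians (Nat.card K) m
  let D : (Fin k → V) → ℝ := fun p ↦ if LinearIndependent K p then 0 else 1
  have hsumD : ∀ x : Submodule K V,
      (#(dependentTuples K x k) : ℝ) = ∑ p : Fin k → x, D (fun i ↦ p i) := fun x ↦ by
    simp only [dependentTuples, natCast_card_filter, D, linearIndependent_coe_iff, ite_not]
  have hD : (#(dependentTuples K V k) : ℝ) = ∑ p, D p := by
    simp only [dependentTuples, natCast_card_filter, D, ite_not]
  simp only [hsumD]
  rw [hD, sum_lagrangians_sum_tuples, sum_lagrangians_sum_tuples, ← sum_add_distrib, mul_sum,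
    ← sum_add_distrib]
  refine sum_le_sum fun p _ ↦ ?_
  have hgp := abs_le.1 (hg p)
  by_cases hp : LinearIndependent K p
  · by_cases h0 : g p = 0
    · simp [D, hp, h0]
    · simp [D, hp, card_lagrangiansAbove_span_range hB hnd hdim hp (hiso p h0), N]
  · simp only [D, hp, if_false, mul_one]
    have h₁ : (0 : ℝ) ≤ N * (g p + 1) := mul_nonneg (Nat.cast_nonneg _) (by linarith)
    nlinarith [mul_le_of_le_one_right
      (Nat.cast_nonneg (α := ℝ) #(lagrangiansAbove B (Submodule.span K (Set.range p)))) hgp.2]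

end Tuples

/-! ### Characters of binary vector spaces -/

section Signs

open Module

/-- The nontrivial character `a ↦ (-1) ^ a` of `F2`. -/
noncomputable def sgn : AddChar F2 ℝ :=
  AddChar.zmodChar 2 (ζ := -1) (by norm_num)

theorem sgn_one : sgn 1 = -1 := by
  simp [sgn, AddChar.zmodChar_apply, ZMod.val_one]

theorem F2.eq_zero_or_eq_one (a : F2) : a = 0 ∨ a = 1 := by
  revert a
  decide

theorem sgn_mul_self (a : F2) : sgn a * sgn a = 1 := by
  rw [← AddChar.map_add_eq_mul, CharTwo.add_self_eq_zero, AddChar.map_zero_eq_one]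

theorem abs_sgn (a : F2) : |sgn a| = 1 := by
  obtain rfl | rfl := a.eq_zero_or_eq_one <;> simp [sgn_one]

theorem sgn_injective : Function.Injective sgn := fun a b h ↦ by
  obtain rfl | rfl := a.eq_zero_or_eq_one <;> obtain rfl | rfl := b.eq_zero_or_eq_one <;>
    first | rfl | norm_num [sgn_one] at h

theorem sgn_eq_one_iff {a : F2} : sgn a = 1 ↔ a = 0 := by
  rw [← AddChar.map_zero_eq_one sgn, sgn_injective.eq_iff]

variable {V W : Type*} [AddCommGroup V] [Module F2 V] [Fintype V]
  [AddCommGroup W] [Module F2 W]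

theorem sum_sgn_linearMap [DecidableEq (Dual F2 V)] (φ : Dual F2 V) :
    ∑ v, sgn (φ v) = if φ = 0 then (Fintype.card V : ℝ) else 0 := by
  classical
  have hiff : sgn.compAddMonoidHom φ.toAddMonoidHom = 0 ↔ φ = 0 := by
    rw [LinearMap.ext_iff, AddChar.ext_iff]
    simp [sgn_eq_one_iff]
  exact (AddChar.sum_eq_ite _).trans (if_congr hiff rfl rfl)

theorem sum_sgn_mul_sgn [DecidableEq W] {B : V →ₗ[F2] W →ₗ[F2] F2} (hB : B.SeparatingRight)
    (c d : W) :
    ∑ a, sgn (B a c) * sgn (B a d) = if c = d then (Fintype.card V : ℝ) else 0 := by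
  classical
  have h := sum_sgn_linearMap (B.flip (c - d))
  have hsub (a : V) : sgn (B.flip (c - d) a) = sgn (B a c) * sgn (B a d) := by
    rw [LinearMap.flip_apply, map_sub, CharTwo.sub_eq_add, AddChar.map_add_eq_mul]
  have hiff : B.flip (c - d) = 0 ↔ c = d :=
    ⟨fun h ↦ sub_eq_zero.1 (hB _ fun a ↦ LinearMap.congr_fun h a), fun h ↦ by simp [h]⟩
  simpa only [hiff, hsub] using h

variable [Fintype W]

/-- **Parseval's identity** for the Fourier transform on a binary vector space. -/
theorem sum_norm_sq_sum_mul_sgn {B : V →ₗ[F2] W →ₗ[F2] F2} (hB : B.SeparatingRight) (t : W → ℂ) :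
    ∑ a, ‖∑ c, t c * sgn (B a c)‖ ^ 2 = Fintype.card V * ∑ c, ‖t c‖ ^ 2 := by
  classical
  rw [← Complex.ofReal_inj]
  push_cast
  simp only [← Complex.conj_mul', map_sum, map_mul, Complex.conj_ofReal, sum_mul_sum]
  calc ∑ a, ∑ c, ∑ d, (starRingEnd ℂ) (t c) * sgn (B a c) * (t d * sgn (B a d))
      = ∑ c, ∑ d, (starRingEnd ℂ) (t c) * t d * (∑ a, sgn (B a c) * sgn (B a d) : ℝ) := by
        push_cast
        simp only [mul_sum]
        rw [sum_comm]
        refine sum_congr rfl fun c _ ↦ ?_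
        rw [sum_comm]
        exact sum_congr rfl fun d _ ↦ sum_congr rfl fun a _ ↦ by ring
    _ = _ := by
        simp [sum_sgn_mul_sgn hB, apply_ite, mul_sum, mul_comm]

/-- **Lindsey's lemma**, in its quadratic form. -/
theorem sq_sum_sum_mul_sgn_le {B : V →ₗ[F2] V →ₗ[F2] F2} (hB : B.SeparatingRight) (t : V → ℝ) :
    (∑ a, ∑ c, t a * t c * sgn (B a c)) ^ 2 ≤ Fintype.card V * (∑ a, t a ^ 2) ^ 2 := by
  have hparseval : ∑ a, (∑ c, t c * sgn (B a c)) ^ 2 = Fintype.card V * ∑ c, t c ^ 2 := by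
    have h := sum_norm_sq_sum_mul_sgn hB fun c ↦ (t c : ℂ)
    simpa only [← Complex.ofReal_mul, ← Complex.ofReal_sum, Complex.norm_real, Real.norm_eq_abs,
      sq_abs] using h
  calc (∑ a, ∑ c, t a * t c * sgn (B a c)) ^ 2
      = (∑ a, t a * ∑ c, t c * sgn (B a c)) ^ 2 := by simp only [mul_sum, mul_assoc]
    _ ≤ (∑ a, t a ^ 2) * ∑ a, (∑ c, t c * sgn (B a c)) ^ 2 := sum_mul_sq_le_sq_mul_sq _ _ _
    _ = _ := by rw [hparseval]; ring

end Signs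

/-! ### The symplectic form -/

section Symplectic

open Module
open scoped Matrix

variable {n : ℕ}

/-- `symp` as a bilinear form. -/
def sympForm (n : ℕ) : LinearMap.BilinForm F2 (PV n) :=
  (dotProductBilin F2 F2).compl₁₂ (LinearMap.fst F2 _ _) (LinearMap.snd F2 _ _) +
    (dotProductBilin F2 F2).compl₁₂ (LinearMap.snd F2 _ _) (LinearMap.fst F2 _ _)

@[simp]
theorem sympForm_apply (a b : PV n) : sympForm n a b = symp a b := rfl

theorem symp_eq_dotProduct (a b : PV n) : symp a b = a.1 ⬝ᵥ b.2 + a.2 ⬝ᵥ b.1 := rfl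

theorem sympForm_isAlt (n : ℕ) : (sympForm n).IsAlt := fun a ↦ by
  rw [sympForm_apply, symp_eq_dotProduct, dotProduct_comm, CharTwo.add_self_eq_zero]

theorem sympForm_nondegenerate (n : ℕ) : (sympForm n).Nondegenerate := by
  refine (sympForm_isAlt n).isRefl.nondegenerate_iff_separatingLeft.2
    fun a ha ↦ Prod.ext ?_ ?_
  · exact dotProduct_eq_zero_iff.1 fun w ↦ by simpa [symp_eq_dotProduct] using ha (0, w)
  · exact dotProduct_eq_zero_iff.1 fun w ↦ by simpa [symp_eq_dotProduct] using ha (w, 0)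

theorem finrank_PV (n : ℕ) : finrank F2 (PV n) = 2 * n := by
  simp [two_mul]

theorem card_PV (n : ℕ) : Fintype.card (PV n) = (2 ^ n) ^ 2 := by
  simp [sq]

theorem card_of_mem_Lset {k : ℕ} {S : Submodule F2 (PV n)} [Fintype S] (hS : S ∈ Lset n k) :
    Fintype.card S = 2 ^ k := by
  rw [card_eq_pow_finrank (K := F2) (V := S), ZMod.card, hS.2]

theorem mem_Lset_iff_isLagrangian {S : Submodule F2 (PV n)} :
    S ∈ Lset n n ↔ IsLagrangian (sympForm n) S := by
  rw [isLagrangian_iff (sympForm_nondegenerate n), finrank_PV, Nat.mul_left_cancel_iff two_pos]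
  exact and_congr_left fun _ ↦ ⟨fun h y hy x hx ↦ h x hx y hy, fun h x hx y hy ↦ h hy x hx⟩

end Symplectic

/-! ### Weyl operators and twisted convolution -/

section Weyl

open scoped Matrix

variable {n : ℕ}

theorem neg_one_zpow_eq_sgn (k : ℤ) : (-1 : ℂ) ^ k = sgn k := by
  obtain hk | hk := k.even_or_odd
  · rw [hk.neg_one_zpow, (ZMod.intCast_eq_zero_iff_even).2 hk, AddChar.map_zero_eq_one,
      Complex.ofReal_one]
  · rw [hk.neg_one_zpow, (ZMod.intCast_eq_one_iff_odd).2 hk, sgn_one]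
    norm_num

theorem intCast_dotZ_liftZ (a b : Fin n → F2) : (dotZ (liftZ a) (liftZ b) : F2) = a ⬝ᵥ b := by
  simp [dotZ, liftZ, dotProduct]

/-- The factor `i^{v̂₁·v̂₂}` that makes the Weyl operator of `v` Hermitian. -/
noncomputable def weylPhase (v : PV n) : ℂ :=
  Complex.I ^ dotZ (liftZ v.1) (liftZ v.2)

theorem weylPhase_ne_zero (v : PV n) : weylPhase v ≠ 0 :=
  zpow_ne_zero _ Complex.I_ne_zero

theorem norm_weylPhase (v : PV n) : ‖weylPhase v‖ = 1 := by
  rw [weylPhase, norm_zpow, Complex.norm_I, one_zpow]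

theorem weylPhase_sq (v : PV n) : weylPhase v ^ 2 = sgn (v.1 ⬝ᵥ v.2) := by
  rw [weylPhase, ← zpow_natCast, zpow_comm, zpow_natCast, Complex.I_sq, neg_one_zpow_eq_sgn,
    intCast_dotZ_liftZ]

theorem phase_eq (x y : PV n) :
    phase x y = weylPhase x * weylPhase y * (weylPhase (x + y))⁻¹ * sgn (x.2 ⬝ᵥ y.1) := by
  simp only [phase, weylPhase, zpow_neg, neg_one_zpow_eq_sgn, intCast_dotZ_liftZ]

theorem norm_phase (x y : PV n) : ‖phase x y‖ = 1 := by
  simp [phase_eq, norm_weylPhase]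

theorem phase_sq (x y : PV n) : phase x y ^ 2 = sgn (symp x y) := by
  have hexp : x.1 ⬝ᵥ x.2 + y.1 ⬝ᵥ y.2 + -((x + y).1 ⬝ᵥ (x + y).2) = symp x y := by
    simp only [symp_eq_dotProduct, Prod.fst_add, Prod.snd_add, add_dotProduct, dotProduct_add,
      CharTwo.neg_eq, dotProduct_comm y.1 x.2]
    linear_combination
      CharTwo.add_self_eq_zero (x.1 ⬝ᵥ x.2) + CharTwo.add_self_eq_zero (y.1 ⬝ᵥ y.2)
  simp only [phase_eq, mul_pow, inv_pow, weylPhase_sq, ← Complex.ofReal_inv, ← Complex.ofReal_mul,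
    ← Complex.ofReal_pow]
  rw [sq (sgn (x.2 ⬝ᵥ y.1)), sgn_mul_self, mul_one, ← AddChar.map_neg_eq_inv,
    ← AddChar.map_add_eq_mul, ← AddChar.map_add_eq_mul, hexp]

theorem phase_re (x y : PV n) :
    (phase x y).re = if symp x y = 0 then sgn (wght x y) else 0 := by
  have hsq := phase_sq x y
  obtain h | h := (symp x y).eq_zero_or_eq_one
  · rw [h, AddChar.map_zero_eq_one, Complex.ofReal_one, sq_eq_one_iff] at hsq
    obtain h' | h' := hsq <;> norm_num [h, h', wght, sgn_one]
  · rw [h, sgn_one, Complex.ofReal_neg, Complex.ofReal_one, ← Complex.I_sq,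
      sq_eq_sq_iff_eq_or_eq_neg] at hsq
    obtain h' | h' := hsq <;> simp [h, h']

/-- The Weyl (Pauli) operator of `v`, acting on functions of `n` bits. Its scalar factor is chosen
so that `phase` is the cocycle of the resulting projective representation. -/
noncomputable def weyl (v : PV n) : Matrix (Fin n → F2) (Fin n → F2) ℂ :=
  .of fun p q ↦ if p = q + v.1 then weylPhase v * sgn (v.2 ⬝ᵥ q) else 0

theorem weyl_mul_weyl (x y : PV n) : weyl x * weyl y = phase x y • weyl (x + y) := by
  ext p r
  simp only [Matrix.mul_apply, weyl, Matrix.of_apply, Matrix.smul_apply, smul_eq_mul, mul_ite,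
    mul_zero, sum_ite_eq', mem_univ, if_true, Prod.fst_add, ite_mul, zero_mul]
  rw [add_assoc r, add_comm y.1]
  refine if_congr Iff.rfl ?_ rfl
  have hsgn : sgn (x.2 ⬝ᵥ (r + y.1)) * sgn (y.2 ⬝ᵥ r) =
      sgn (x.2 ⬝ᵥ y.1) * sgn ((x + y).2 ⬝ᵥ r) := by
    simp only [Prod.snd_add, dotProduct_add, add_dotProduct, AddChar.map_add_eq_mul]
    ring
  calc weylPhase x * sgn (x.2 ⬝ᵥ (r + y.1)) * (weylPhase y * sgn (y.2 ⬝ᵥ r))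
      = weylPhase x * weylPhase y * ↑(sgn (x.2 ⬝ᵥ (r + y.1)) * sgn (y.2 ⬝ᵥ r)) := by
        push_cast
        ring
    _ = phase x y * (weylPhase (x + y) * sgn ((x + y).2 ⬝ᵥ r)) := by
        rw [hsgn, phase_eq]
        push_cast
        field_simp [weylPhase_ne_zero (x + y)]

open scoped Matrix.Norms.Frobenius

theorem frobenius_norm_sq {ι κ : Type*} [Fintype ι] [Fintype κ] (A : Matrix ι κ ℂ) :
    ‖A‖ ^ 2 = ∑ i, ∑ j, ‖A i j‖ ^ 2 := by
  rw [Matrix.frobenius_norm_def, ← Real.sqrt_eq_rpow]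
  exact_mod_cast Real.sq_sqrt (by positivity)

theorem frobenius_norm_sq_sum_smul_weyl (c : PV n → ℂ) :
    ‖∑ v, c v • weyl v‖ ^ 2 = 2 ^ n * ∑ v, ‖c v‖ ^ 2 := by
  have hentry (x q : Fin n → F2) : (∑ v, c v • weyl v) (x + q) q =
      ∑ z, c (x, z) * weylPhase (x, z) * sgn (q ⬝ᵥ z) := by
    simp [Matrix.sum_apply, weyl, Fintype.sum_prod_type, add_comm x q, dotProduct_comm q, mul_assoc]
  have hsep : (dotProductBilin F2 F2 : (Fin n → F2) →ₗ[F2] _).SeparatingRight :=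
    fun z hz ↦ dotProduct_eq_zero_iff.1 fun w ↦ dotProduct_comm z w ▸ hz w
  calc ‖∑ v, c v • weyl v‖ ^ 2
      = ∑ q, ∑ x, ‖(∑ v, c v • weyl v) (x + q) q‖ ^ 2 := by
        rw [frobenius_norm_sq, sum_comm]
        exact sum_congr rfl fun q _ ↦ (Equiv.sum_comp (Equiv.addRight q) _).symm
    _ = ∑ x, ∑ q, ‖∑ z, c (x, z) * weylPhase (x, z) * sgn (q ⬝ᵥ z)‖ ^ 2 := by
        simp only [hentry]
        exact sum_comm
    _ = ∑ x, 2 ^ n * ∑ z, ‖c (x, z)‖ ^ 2 := by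
        refine sum_congr rfl fun x _ ↦ ?_
        have h := sum_norm_sq_sum_mul_sgn hsep fun z ↦ c (x, z) * weylPhase (x, z)
        simpa [norm_weylPhase] using h
    _ = _ := by
        rw [← mul_sum, Fintype.sum_prod_type]

/-- The convolution of functions on `PV n` twisted by `phase`, with coefficients
corresponding to the product of Weyl operators. -/
noncomputable def twistedConv (s t : PV n → ℂ) (u : PV n) : ℂ :=
  ∑ a, s a * t (a + u) * phase a (a + u)

theorem sum_smul_weyl_mul_sum_smul_weyl (s t : PV n → ℂ) :
    (∑ a, s a • weyl a) * (∑ b, t b • weyl b) = ∑ u, twistedConv s t u • weyl u := by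
  calc (∑ a, s a • weyl a) * (∑ b, t b • weyl b)
      = ∑ a, ∑ b, (s a * t b * phase a b) • weyl (a + b) := by
        simp only [sum_mul_sum, smul_mul_smul_comm, weyl_mul_weyl, smul_smul]
    _ = ∑ a, ∑ u, (s a * t (a + u) * phase a (a + u)) • weyl u := by
        refine sum_congr rfl fun a _ ↦ ?_
        rw [← Equiv.sum_comp (Equiv.addLeft a)]
        simp [← add_assoc, ZModModule.add_self]
    _ = _ := by
        rw [sum_comm]
        simp only [twistedConv, sum_smul]

theorem sum_norm_sq_twistedConv_le (s t : PV n → ℂ) :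
    ∑ u, ‖twistedConv s t u‖ ^ 2 ≤ 2 ^ n * (∑ a, ‖s a‖ ^ 2) * ∑ a, ‖t a‖ ^ 2 := by
  have h : ‖∑ u, twistedConv s t u • weyl u‖ ^ 2 ≤
      ‖∑ a, s a • weyl a‖ ^ 2 * ‖∑ a, t a • weyl a‖ ^ 2 := by
    rw [← sum_smul_weyl_mul_sum_smul_weyl, ← mul_pow]
    gcongr
    exact Matrix.frobenius_norm_mul _ _
  simp only [frobenius_norm_sq_sum_smul_weyl] at h
  refine le_of_mul_le_mul_left (h.trans_eq ?_) (by positivity : (0 : ℝ) < 2 ^ n)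
  ring

end Weyl

/-! ### Correlations along Lagrangian subspaces -/

section Correlation

variable {n : ℕ}

/-- The correlation at `a` of `s` with its translate by `u`, weighted by the sign of the phase.
It vanishes unless `a` and `u` are orthogonal, since the phase is then imaginary. -/
noncomputable def corr (s : PV n → ℝ) (u a : PV n) : ℝ :=
  s a * s (a + u) * (phase a (a + u)).re

theorem symp_self_add (a u : PV n) : symp a (a + u) = symp a u := by
  rw [← sympForm_apply, map_add, sympForm_isAlt, zero_add, sympForm_apply]

theorem corr_of_symp_eq_zero (s : PV n → ℝ) {u a : PV n} (h : symp a u = 0) :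
    corr s u a = s a * s (a + u) * sgn (wght a (a + u)) := by
  rw [corr, phase_re, symp_self_add, if_pos h]

theorem symp_eq_zero_of_corr_ne_zero {s : PV n → ℝ} {u a : PV n} (h : corr s u a ≠ 0) :
    symp a u = 0 := by
  contrapose! h
  rw [corr, phase_re, symp_self_add, if_neg h, mul_zero]

theorem abs_corr_le (s : PV n → ℝ) (u a : PV n) : |corr s u a| ≤ |s a * s (a + u)| := by
  rw [corr, abs_mul _ (phase a (a + u)).re]
  exact mul_le_of_le_one_right (abs_nonneg _) (norm_phase a (a + u) ▸ Complex.abs_re_le_norm _)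

theorem sum_sq_sum_corr_le (s : PV n → ℝ) :
    ∑ u, (∑ a, corr s u a) ^ 2 ≤ 2 ^ n * (∑ a, s a ^ 2) ^ 2 := by
  have hre (u : PV n) : ∑ a, corr s u a = (twistedConv (s ·) (s ·) u).re := by
    simp only [corr, twistedConv, Complex.re_sum, ← Complex.ofReal_mul, Complex.re_ofReal_mul]
  calc ∑ u, (∑ a, corr s u a) ^ 2
      ≤ ∑ u, ‖twistedConv (s ·) (s ·) u‖ ^ 2 := by
        refine sum_le_sum fun u _ ↦ ?_
        rw [hre, ← sq_abs]
        gcongr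
        exact Complex.abs_re_le_norm _
    _ ≤ 2 ^ n * (∑ a, ‖(s a : ℂ)‖ ^ 2) * ∑ a, ‖(s a : ℂ)‖ ^ 2 := sum_norm_sq_twistedConv_le _ _
    _ = _ := by
        simp only [Complex.norm_real, Real.norm_eq_abs, sq_abs]
        ring

theorem sum_sum_sum_corr_mul_corr_mul_sgn_le (s : PV n → ℝ) :
    ∑ u, ∑ a, ∑ c, corr s u a * corr s u c * sgn (symp a c) ≤ 2 ^ n * (∑ a, s a ^ 2) ^ 2 := by
  calc ∑ u, ∑ a, ∑ c, corr s u a * corr s u c * sgn (symp a c)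
      ≤ ∑ u, 2 ^ n * ∑ a, corr s u a ^ 2 := by
        refine sum_le_sum fun u _ ↦ ?_
        have h := sq_sum_sum_mul_sgn_le (sympForm_nondegenerate n).2 (corr s u)
        rw [card_PV, Nat.cast_pow, Nat.cast_pow, ← mul_pow] at h
        exact le_of_sq_le_sq h (by positivity)
    _ ≤ ∑ u, 2 ^ n * ∑ a, s a ^ 2 * s (a + u) ^ 2 := by
        gcongr with u _ a _
        rw [← mul_pow]
        exact sq_le_sq.2 (abs_corr_le s u a)
    _ = 2 ^ n * ∑ a, ∑ u, s a ^ 2 * s (a + u) ^ 2 := by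
        rw [← mul_sum, sum_comm]
    _ = _ := by
        rw [sq (∑ a, s a ^ 2), sum_mul_sum]
        congr 1
        exact sum_congr rfl fun a _ ↦ Equiv.sum_comp (Equiv.addLeft a) fun b ↦ s a ^ 2 * s b ^ 2

/-- The product of two correlations with the same translate, supported on isotropic triples. -/
noncomputable def tripleCorr (s : PV n → ℝ) (p : Fin 3 → PV n) : ℝ :=
  if symp (p 1) (p 2) = 0 then corr s (p 0) (p 1) * corr s (p 0) (p 2) else 0

theorem sum_tripleCorr_le (s : PV n → ℝ) :
    ∑ p, tripleCorr s p ≤ 2 ^ n * (∑ a, s a ^ 2) ^ 2 := by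
  have hind (b : F2) (r : ℝ) : (if b = 0 then r else 0) = (r + r * sgn b) / 2 := by
    obtain rfl | rfl := b.eq_zero_or_eq_one <;> simp [sgn_one]
  have hsum : ∑ p, tripleCorr s p = (∑ u, (∑ a, corr s u a) ^ 2 +
      ∑ u, ∑ a, ∑ c, corr s u a * corr s u c * sgn (symp a c)) / 2 := by
    simp [sum_fin_three_pi, tripleCorr, hind, sum_add_distrib, ← sum_div, sq, sum_mul_sum]
  linarith [sum_sq_sum_corr_le s, sum_sum_sum_corr_mul_corr_mul_sgn_le s]

theorem abs_tripleCorr_le_one {s : PV n → ℝ} (hs : ∀ v, |s v| ≤ 1) (p : Fin 3 → PV n) :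
    |tripleCorr s p| ≤ 1 := by
  have hcorr (u a : PV n) : |corr s u a| ≤ 1 :=
    (abs_corr_le s u a).trans <| by
      rw [abs_mul]
      exact mul_le_one₀ (hs _) (abs_nonneg _) (hs _)
  rw [tripleCorr]
  split_ifs
  · rw [abs_mul]
    exact mul_le_one₀ (hcorr _ _) (abs_nonneg _) (hcorr _ _)
  · simp

theorem sympForm_eq_zero_of_tripleCorr_ne_zero {s : PV n → ℝ} {p : Fin 3 → PV n}
    (h : tripleCorr s p ≠ 0) (i j : Fin 3) : sympForm n (p i) (p j) = 0 := by
  obtain ⟨h₁₂, h⟩ := ite_ne_right_iff.1 h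
  have h₁₀ : sympForm n (p 1) (p 0) = 0 := symp_eq_zero_of_corr_ne_zero (left_ne_zero_of_mul h)
  have h₂₀ : sympForm n (p 2) (p 0) = 0 := symp_eq_zero_of_corr_ne_zero (right_ne_zero_of_mul h)
  have halt := sympForm_isAlt n
  match i, j with
  | 0, 0 | 1, 1 | 2, 2 => exact halt _
  | 1, 0 => exact h₁₀
  | 0, 1 => exact halt.isRefl _ _ h₁₀
  | 2, 0 => exact h₂₀
  | 0, 2 => exact halt.isRefl _ _ h₂₀
  | 1, 2 => exact h₁₂
  | 2, 1 => exact halt.isRefl _ _ h₁₂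

/-- The Cauchy–Schwarz step behind the Gowers `U²` norm. -/
theorem sum_pow_four_le_card_mul {G : Type*} [AddCommGroup G] [Fintype G] (h : G → ℝ) :
    (∑ a, h a) ^ 4 ≤ Fintype.card G * ∑ u, (∑ a, h a * h (a + u)) ^ 2 := by
  have hsq : (∑ a, h a) ^ 2 = ∑ u, ∑ a, h a * h (a + u) := by
    rw [sq, sum_mul_sum]
    refine Eq.trans (sum_congr rfl fun a _ ↦ ?_) sum_comm
    exact (Equiv.sum_comp (Equiv.addLeft a) fun b ↦ h a * h b).symm
  calc (∑ a, h a) ^ 4 = (∑ u, ∑ a, h a * h (a + u)) ^ 2 := by rw [← hsq]; ring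
    _ ≤ _ := sq_sum_le_card_mul_sum_sq

open Classical in
theorem IsOutcome.sum_pow_four_le {x : Submodule F2 (PV n)} (hx : IsIsotropic x) {f : x → F2}
    (hf : IsOutcome x f) (s : PV n → ℝ) :
    (∑ v : x, s v * sgn (f v)) ^ 4 ≤
      Fintype.card x * ∑ p : Fin 3 → x, tripleCorr s (fun i ↦ p i) := by
  have hmul (u a : x) : s a * sgn (f a) * (s ↑(a + u) * sgn (f (a + u))) =
      sgn (f u) * corr s u a := by
    have hfu : f a + f (a + u) = f u + wght (a : PV n) (a + u : x) := by
      have h := hf a (a + u)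
      rw [← add_assoc, ZModModule.add_self, zero_add] at h
      rw [h, add_assoc, CharTwo.add_self_eq_zero, add_zero]
    rw [corr_of_symp_eq_zero s (hx a a.2 u u.2), ← Submodule.coe_add]
    calc s a * sgn (f a) * (s ↑(a + u) * sgn (f (a + u)))
        = s a * s ↑(a + u) * sgn (f a + f (a + u)) := by
          rw [AddChar.map_add_eq_mul]
          ring
      _ = sgn (f u) * (s a * s ↑(a + u) * sgn (wght (a : PV n) (a + u : x))) := by
          rw [hfu, AddChar.map_add_eq_mul]
          ring
  have htriple (u a c : x) : tripleCorr s ![u, a, c] = corr s u a * corr s u c :=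
    if_pos (hx a a.2 c c.2)
  calc (∑ v : x, s v * sgn (f v)) ^ 4
      ≤ Fintype.card x * ∑ u : x, (∑ a : x, sgn (f u) * corr s u a) ^ 2 := by
        simpa only [hmul] using sum_pow_four_le_card_mul fun v : x ↦ s v * sgn (f v)
    _ = Fintype.card x * ∑ u : x, (∑ a : x, corr s u a) ^ 2 := by
        simp only [← mul_sum, mul_pow, sq (sgn _), sgn_mul_self, one_mul]
    _ = _ := by
        simp only [sq, sum_mul_sum, sum_fin_three_pi, ← htriple]
        congr! 8 with u _ a _ c _ i
        fin_cases i <;> rfl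

end Correlation

/-! ### The fourth moment -/

section FourthMoment


variable {n m : ℕ} {f : (S : Submodule F2 (PV n)) → (S → F2)}

theorem card_lagrangians (n : ℕ) : #(lagrangiansAbove (sympForm n) ⊥) = numLagrangians 2 n := by
  rw [card_lagrangiansAbove_bot (sympForm_isAlt n) (sympForm_nondegenerate n) (finrank_PV n),
    Nat.card_zmod]

theorem mem_Lset_of_mem_lagrangiansAbove {W x : Submodule F2 (PV n)}
    (hx : x ∈ lagrangiansAbove (sympForm n) W) : x ∈ Lset n n :=
  mem_Lset_iff_isLagrangian.2 (mem_lagrangiansAbove.1 hx).1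

theorem cast_card_dependentTuples_three_le (V : Type*) [AddCommGroup V] [Module F2 V] [Fintype V] :
    (#(dependentTuples F2 V 3) : ℝ) ≤ 7 * (Fintype.card V : ℝ) ^ 2 := by
  have h := card_dependentTuples_le (K := F2) (V := V) 2
  rw [Nat.card_zmod, show ∑ i ∈ range (2 + 1), 2 ^ i = 7 by rfl] at h
  exact_mod_cast h

open Classical in
theorem sum_lagrangians_sum_tripleCorr_le (hn : n = 3 + m) {s : PV n → ℝ} (hs : ∀ v, |s v| ≤ 1) :
    ∑ x ∈ lagrangiansAbove (sympForm n) ⊥, ∑ p : Fin 3 → x, tripleCorr s (fun i ↦ p i) ≤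
      numLagrangians 2 m * ((2 ^ n) ^ 5 + 7 * (2 ^ n) ^ 4) +
        numLagrangians 2 n * (7 * (2 ^ n) ^ 2) := by
  have hsq : ∑ a, s a ^ 2 ≤ (2 ^ n) ^ 2 := by
    calc ∑ a, s a ^ 2 ≤ ∑ _a : PV n, 1 :=
          sum_le_sum fun a _ ↦ (sq_le_one_iff_abs_le_one _).2 (hs a)
      _ = (2 ^ n) ^ 2 := by
          rw [sum_const, nsmul_one, card_univ, card_PV, Nat.cast_pow, Nat.cast_pow, Nat.cast_ofNat]
  have htriple : ∑ p, tripleCorr s p ≤ (2 ^ n) ^ 5 := by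
    calc ∑ p, tripleCorr s p ≤ 2 ^ n * (∑ a, s a ^ 2) ^ 2 := sum_tripleCorr_le s
      _ ≤ 2 ^ n * ((2 ^ n) ^ 2) ^ 2 := by gcongr
      _ = (2 ^ n) ^ 5 := by ring
  have hdep : (#(dependentTuples F2 (PV n) 3) : ℝ) ≤ 7 * (2 ^ n) ^ 4 := by
    refine (cast_card_dependentTuples_three_le (PV n)).trans_eq ?_
    rw [card_PV]
    push_cast
    ring
  have hdep' : ∑ x ∈ lagrangiansAbove (sympForm n) ⊥, (#(dependentTuples F2 x 3) : ℝ) ≤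
      numLagrangians 2 n * (7 * (2 ^ n) ^ 2) := by
    rw [← card_lagrangians, ← nsmul_eq_mul]
    refine sum_le_card_nsmul _ _ _ fun x hx ↦ ?_
    have h := cast_card_dependentTuples_three_le x
    rwa [card_of_mem_Lset (mem_Lset_of_mem_lagrangiansAbove hx), Nat.cast_pow,
      Nat.cast_ofNat] at h
  have hsum := sum_lagrangians_sum_tuples_le (sympForm_isAlt n) (sympForm_nondegenerate n)
    (by rw [finrank_PV, hn]) (abs_tripleCorr_le_one hs)
    fun p hp ↦ sympForm_eq_zero_of_tripleCorr_ne_zero hp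
  rw [Nat.card_zmod] at hsum
  refine hsum.trans ?_
  gcongr

theorem two_pow_pow_three_mul_numLagrangians_le (hn : n = 3 + m) :
    (2 ^ n) ^ 3 * numLagrangians 2 m ≤ 8 * numLagrangians 2 n := by
  subst hn
  rw [add_comm 3 m]
  calc (2 ^ (m + 3)) ^ 3 * numLagrangians 2 m
      = 8 * (2 ^ (m + 3) * (2 ^ (m + 2) * (2 ^ (m + 1) * numLagrangians 2 m))) := by ring
    _ ≤ 8 * (2 ^ (m + 3) * (2 ^ (m + 2) * numLagrangians 2 (m + 1))) := by
        gcongr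
        exact pow_succ_mul_numLagrangians_le 2 m
    _ ≤ 8 * (2 ^ (m + 3) * numLagrangians 2 (m + 2)) := by
        gcongr
        exact pow_succ_mul_numLagrangians_le 2 (m + 1)
    _ ≤ 8 * numLagrangians 2 (m + 3) := by
        gcongr
        exact pow_succ_mul_numLagrangians_le 2 (m + 2)

open Classical in
theorem sum_lagrangians_pow_four_le (hn : n = 3 + m) (hf : ∀ S ∈ Lset n n, IsOutcome S (f S))
    {s : PV n → ℝ} (hs : ∀ v, |s v| ≤ 1) :
    ∑ x ∈ lagrangiansAbove (sympForm n) ⊥, (∑ v : x, s v * sgn (f x v)) ^ 4 ≤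
      71 * (2 ^ n) ^ 3 * numLagrangians 2 n := by
  calc ∑ x ∈ lagrangiansAbove (sympForm n) ⊥, (∑ v : x, s v * sgn (f x v)) ^ 4
      ≤ 2 ^ n * ∑ x ∈ lagrangiansAbove (sympForm n) ⊥,
          ∑ p : Fin 3 → x, tripleCorr s (fun i ↦ p i) := by
        rw [mul_sum]
        refine sum_le_sum fun x hx ↦ ?_
        have hL := mem_Lset_of_mem_lagrangiansAbove hx
        simpa [card_of_mem_Lset hL] using (hf x hL).sum_pow_four_le hL.1 s
    _ ≤ 2 ^ n * (numLagrangians 2 m * ((2 ^ n) ^ 5 + 7 * (2 ^ n) ^ 4) +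
          numLagrangians 2 n * (7 * (2 ^ n) ^ 2)) := by
        gcongr
        exact sum_lagrangians_sum_tripleCorr_le hn hs
    _ ≤ 2 ^ n * (numLagrangians 2 m * (8 * (2 ^ n) ^ 5) +
          numLagrangians 2 n * (7 * (2 ^ n) ^ 2)) := by
        have h : (1 : ℝ) ≤ 2 ^ n := one_le_pow₀ one_le_two
        gcongr
        nlinarith [pow_le_pow_right₀ h (show 4 ≤ 5 by simp)]
    _ = (2 ^ n) ^ 3 * (8 * ((2 ^ n) ^ 3 * numLagrangians 2 m) + 7 * numLagrangians 2 n) := by ring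
    _ ≤ (2 ^ n) ^ 3 * (8 * (8 * numLagrangians 2 n) + 7 * numLagrangians 2 n) := by
        gcongr _ * (8 * ?_ + _)
        exact_mod_cast two_pow_pow_three_mul_numLagrangians_le hn
    _ = 71 * (2 ^ n) ^ 3 * numLagrangians 2 n := by ring

end FourthMoment

/-! ### Biases of hidden variable assignments -/

section Bias


variable {n m : ℕ} {f : (S : Submodule F2 (PV n)) → (S → F2)}

open Classical in
/-- The value `±1` that the context `x` assigns to `v`, set to `0` when `v ∉ x`. -/
noncomputable def outcomeSign (f : (S : Submodule F2 (PV n)) → (S → F2))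
    (x : Submodule F2 (PV n)) (v : PV n) : ℝ :=
  if h : v ∈ x then sgn (f x ⟨v, h⟩) else 0

theorem outcomeSign_of_mem {x : Submodule F2 (PV n)} {v : PV n} (h : v ∈ x) :
    outcomeSign f x v = sgn (f x ⟨v, h⟩) :=
  dif_pos h

theorem outcomeSign_of_notMem {x : Submodule F2 (PV n)} {v : PV n} (h : v ∉ x) :
    outcomeSign f x v = 0 :=
  dif_neg h

theorem abs_outcomeSign_le_one (x : Submodule F2 (PV n)) (v : PV n) : |outcomeSign f x v| ≤ 1 := by
  rw [outcomeSign]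
  split_ifs
  · exact (abs_sgn _).le
  · simp

open Classical in
theorem sum_mul_outcomeSign (x : Submodule F2 (PV n)) (s : PV n → ℝ) :
    ∑ v, s v * outcomeSign f x v = ∑ v : x, s v * sgn (f x v) := by
  calc ∑ v, s v * outcomeSign f x v = ∑ v with v ∈ x, s v * outcomeSign f x v := by
        refine (sum_filter_of_ne fun v _ h ↦ ?_).symm
        contrapose! h
        rw [outcomeSign_of_notMem h, mul_zero]
    _ = ∑ v : x, s v * outcomeSign f x v := sum_subtype _ (by simp) _
    _ = _ := by simp only [outcomeSign_of_mem (SetLike.coe_mem _)]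

/-- The average value assigned to `v` by the Lagrangian subspaces containing it. -/
noncomputable def bias (f : (S : Submodule F2 (PV n)) → (S → F2)) (v : PV n) : ℝ :=
  (∑ x ∈ lagrangiansAbove (sympForm n) (Submodule.span F2 {v}), outcomeSign f x v) /
    #(lagrangiansAbove (sympForm n) (Submodule.span F2 {v}))

theorem abs_bias_le_one (v : PV n) : |bias f v| ≤ 1 := by
  rw [bias, abs_div, Nat.abs_cast]
  refine div_le_one_of_le₀ ((abs_sum_le_sum_abs _ _).trans ?_) (Nat.cast_nonneg _)
  simpa using sum_le_card_nsmul _ _ 1 fun x _ ↦ abs_outcomeSign_le_one (f := f) x v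

theorem numLagrangians_le_card_lagrangiansAbove_span_singleton (hn : n = m + 1) (v : PV n) :
    numLagrangians 2 m ≤ #(lagrangiansAbove (sympForm n) (Submodule.span F2 {v})) := by
  obtain rfl | hv := eq_or_ne v 0
  · rw [Submodule.span_zero_singleton, card_lagrangians, hn, numLagrangians_succ]
    exact Nat.le_mul_of_pos_left _ (Nat.succ_pos _)
  · rw [card_lagrangiansAbove_span_singleton (sympForm_isAlt n) (sympForm_nondegenerate n)
      (by rw [finrank_PV, hn]) hv, Nat.card_zmod]

theorem sum_lagrangians_outcomeSign (v : PV n) :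
    ∑ x ∈ lagrangiansAbove (sympForm n) ⊥, outcomeSign f x v =
      #(lagrangiansAbove (sympForm n) (Submodule.span F2 {v})) * bias f v := by
  set L := lagrangiansAbove (sympForm n) (Submodule.span F2 {v})
  have hL : ∑ x ∈ L, outcomeSign f x v = #L * bias f v := by
    rw [bias, mul_div_cancel_of_imp']
    intro h
    change ∑ x ∈ L, outcomeSign f x v = 0
    rw [card_eq_zero.1 (Nat.cast_eq_zero.1 h), sum_empty]
  rw [← hL]
  refine (sum_subset (fun x hx ↦ ?_) fun x hx hxL ↦ ?_).symm
  · exact mem_lagrangiansAbove.2 ⟨(mem_lagrangiansAbove.1 hx).1, bot_le⟩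
  · refine outcomeSign_of_notMem fun hv ↦ hxL (mem_lagrangiansAbove.2 ⟨?_, ?_⟩)
    · exact (mem_lagrangiansAbove.1 hx).1
    · exact (Submodule.span_singleton_le_iff_mem v x).2 hv

open Classical in
theorem numLagrangians_mul_sum_sq_bias_le (hn : n = m + 1) :
    numLagrangians 2 m * ∑ v, bias f v ^ 2 ≤
      ∑ x ∈ lagrangiansAbove (sympForm n) ⊥, ∑ v : x, bias f v * sgn (f x v) := by
  simp only [← sum_mul_outcomeSign]
  rw [sum_comm, mul_sum]
  refine sum_le_sum fun v _ ↦ ?_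
  rw [← mul_sum, sum_lagrangians_outcomeSign, mul_left_comm, ← sq]
  gcongr
  exact numLagrangians_le_card_lagrangiansAbove_span_singleton hn v

theorem sum_pow_four_le_card_pow_three_mul {ι : Type*} (t : Finset ι) (g : ι → ℝ) :
    (∑ i ∈ t, g i) ^ 4 ≤ #t ^ 3 * ∑ i ∈ t, g i ^ 4 := by
  calc (∑ i ∈ t, g i) ^ 4 = ((∑ i ∈ t, g i) ^ 2) ^ 2 := by ring
    _ ≤ (#t * ∑ i ∈ t, g i ^ 2) ^ 2 := by
        gcongr
        exact sq_sum_le_card_mul_sum_sq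
    _ = #t ^ 2 * (∑ i ∈ t, g i ^ 2) ^ 2 := mul_pow _ _ _
    _ ≤ #t ^ 2 * (#t * ∑ i ∈ t, (g i ^ 2) ^ 2) := by
        gcongr
        exact sq_sum_le_card_mul_sum_sq
    _ = #t ^ 3 * ∑ i ∈ t, g i ^ 4 := by
        simp only [← pow_mul]
        ring

open Classical in
theorem sum_sq_bias_pow_four_le (hn : 3 ≤ n) (hf : ∀ S ∈ Lset n n, IsOutcome S (f S)) :
    (∑ v, bias f v ^ 2) ^ 4 ≤ 71 * (2 ^ n) ^ 3 * (2 ^ n + 1) ^ 4 := by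
  obtain ⟨m, hm⟩ := Nat.exists_eq_add_of_le hn
  obtain ⟨k, hk⟩ := Nat.exists_eq_succ_of_ne_zero (by lia : n ≠ 0)
  set N := numLagrangians 2 k
  have hN : (0 : ℝ) < N := by exact_mod_cast numLagrangians_pos 2 k
  have hNn : (numLagrangians 2 n : ℝ) = (2 ^ n + 1) * N := by
    rw [hk, numLagrangians_succ]
    push_cast
    rfl
  refine le_of_mul_le_mul_left ?_ (pow_pos hN 4)
  calc N ^ 4 * (∑ v, bias f v ^ 2) ^ 4
      = (N * ∑ v, bias f v ^ 2) ^ 4 := (mul_pow _ _ _).symm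
    _ ≤ (∑ x ∈ lagrangiansAbove (sympForm n) ⊥, ∑ v : x, bias f v * sgn (f x v)) ^ 4 := by
        gcongr
        exact numLagrangians_mul_sum_sq_bias_le hk
    _ ≤ numLagrangians 2 n ^ 3 * ∑ x ∈ lagrangiansAbove (sympForm n) ⊥,
          (∑ v : x, bias f v * sgn (f x v)) ^ 4 := by
        rw [← card_lagrangians]
        exact sum_pow_four_le_card_pow_three_mul _ _
    _ ≤ numLagrangians 2 n ^ 3 * (71 * (2 ^ n) ^ 3 * numLagrangians 2 n) := by
        gcongr
        exact sum_lagrangians_pow_four_le hm hf abs_bias_le_one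
    _ = N ^ 4 * (71 * (2 ^ n) ^ 3 * (2 ^ n + 1) ^ 4) := by
        rw [hNn]
        ring

end Bias

section Average


variable {n : ℕ} {f : (S : Submodule F2 (PV n)) → (S → F2)}

theorem mem_span_singleton_F2 {V : Type*} [AddCommGroup V] [Module F2 V] {v w : V} :
    w ∈ Submodule.span F2 {v} ↔ w = 0 ∨ w = v := by
  rw [Submodule.mem_span_singleton]
  refine ⟨?_, ?_⟩
  · rintro ⟨a, rfl⟩
    obtain rfl | rfl := a.eq_zero_or_eq_one <;> simp
  · rintro (rfl | rfl)
    · exact ⟨0, zero_smul _ _⟩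
    · exact ⟨1, one_smul _ _⟩

theorem outcomeCount_span_singleton {v : PV n} (hv : v ≠ 0) (c : F2) :
    outcomeCount n f (Submodule.span F2 {v}) c =
      #{x ∈ lagrangiansAbove (sympForm n) (Submodule.span F2 {v}) | outcomeSign f x v = sgn c} := by
  rw [outcomeCount, Nat.card_coe_set_eq, ← Set.ncard_coe_finset]
  congr 1
  ext x
  simp only [Set.mem_ofPred_eq, coe_filter, mem_lagrangiansAbove, mem_Lset_iff_isLagrangian,
    and_assoc]
  refine and_congr_right fun _ ↦ Iff.trans (exists_congr fun h ↦ ?_) exists_prop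
  have hvx : v ∈ x := h (Submodule.mem_span_singleton_self v)
  rw [outcomeSign_of_mem hvx, sgn_injective.eq_iff]
  refine ⟨?_, fun hc ↦ ⟨v, Submodule.mem_span_singleton_self v, hv, hc⟩⟩
  rintro ⟨w, hw, hw0, hc⟩
  obtain rfl := (mem_span_singleton_F2.1 hw).resolve_left hw0
  exact hc

theorem outcomeSign_eq_one_or_eq_neg_one {v : PV n} {x : Submodule F2 (PV n)}
    (hx : x ∈ lagrangiansAbove (sympForm n) (Submodule.span F2 {v})) :
    outcomeSign f x v = 1 ∨ outcomeSign f x v = -1 := by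
  have hvx : v ∈ x := (mem_lagrangiansAbove.1 hx).2 (Submodule.mem_span_singleton_self v)
  rw [outcomeSign_of_mem hvx]
  exact mul_self_eq_one_iff.1 (sgn_mul_self _)

theorem outcomeCount_zero_add_one {v : PV n} (hv : v ≠ 0) :
    (outcomeCount n f (Submodule.span F2 {v}) 0 : ℝ) +
        outcomeCount n f (Submodule.span F2 {v}) 1 =
      #(lagrangiansAbove (sympForm n) (Submodule.span F2 {v})) := by
  simp only [outcomeCount_span_singleton hv, natCast_card_filter, ← sum_add_distrib,
    AddChar.map_zero_eq_one, sgn_one]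
  rw [← nsmul_one]
  refine sum_eq_card_nsmul fun x hx ↦ ?_
  obtain h | h := outcomeSign_eq_one_or_eq_neg_one (f := f) hx <;> norm_num [h]

theorem outcomeCount_zero_sub_one {v : PV n} (hv : v ≠ 0) :
    (outcomeCount n f (Submodule.span F2 {v}) 0 : ℝ) -
        outcomeCount n f (Submodule.span F2 {v}) 1 =
      ∑ x ∈ lagrangiansAbove (sympForm n) (Submodule.span F2 {v}), outcomeSign f x v := by
  simp only [outcomeCount_span_singleton hv, natCast_card_filter, ← sum_sub_distrib,
    AddChar.map_zero_eq_one, sgn_one]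
  refine sum_congr rfl fun x hx ↦ ?_
  obtain h | h := outcomeSign_eq_one_or_eq_neg_one (f := f) hx <;> norm_num [h]

theorem min_div_add_mul_one_sub_eq {a b : ℝ} (h : a + b ≠ 0) :
    min a b / (a + b) * (1 - min a b / (a + b)) = (1 - ((a - b) / (a + b)) ^ 2) / 4 := by
  obtain hab | hab := le_total a b
  · rw [min_eq_left hab]
    field_simp
    ring
  · rw [min_eq_right hab]
    field_simp
    ring

theorem minorityFrac_mul_one_sub_eq {v : PV n} (hv : v ≠ 0) :
    minorityFrac n f (Submodule.span F2 {v}) * (1 - minorityFrac n f (Submodule.span F2 {v})) =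
      (1 - bias f v ^ 2) / 4 := by
  have hn : n ≠ 0 := by
    rintro rfl
    exact hv (Subsingleton.elim _ _)
  obtain ⟨m, hm⟩ := Nat.exists_eq_succ_of_ne_zero hn
  have hpos := (numLagrangians_pos 2 m).trans_le
    (numLagrangians_le_card_lagrangiansAbove_span_singleton hm v)
  rw [bias, ← outcomeCount_zero_sub_one hv, ← outcomeCount_zero_add_one (f := f) hv]
  refine min_div_add_mul_one_sub_eq ?_
  rw [outcomeCount_zero_add_one hv]
  exact_mod_cast hpos.ne'

theorem bijOn_span_singleton_Lset_one (n : ℕ) :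
    Set.BijOn (fun v : PV n ↦ Submodule.span F2 {v}) ↑(univ.erase (0 : PV n)) (Lset n 1) := by
  rw [coe_erase, coe_univ]
  refine ⟨fun v hv ↦ ⟨fun x hx y hy ↦ ?_, finrank_span_singleton hv.2⟩, fun v hv w _ h ↦ ?_, ?_⟩
  · have hle : Submodule.span F2 {v} ≤ (sympForm n).orthogonal (Submodule.span F2 {v}) :=
      span_le_orthogonal_span (by rintro _ rfl _ rfl; exact sympForm_isAlt n _)
    exact hle hy x hx
  · have hvw : v ∈ Submodule.span F2 {w} :=
      (show Submodule.span F2 {v} = Submodule.span F2 {w} from h) ▸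
        Submodule.mem_span_singleton_self v
    exact (mem_span_singleton_F2.1 hvw).resolve_left hv.2
  · rintro W ⟨-, hW⟩
    obtain ⟨v, hv0, hspan⟩ := finrank_eq_one_iff'.1 hW
    refine ⟨v, ⟨Set.mem_univ _, by simpa using hv0⟩, le_antisymm ?_ fun w hw ↦ ?_⟩
    · exact (Submodule.span_singleton_le_iff_mem _ _).2 v.2
    · obtain ⟨c, hc⟩ := hspan ⟨w, hw⟩
      exact Submodule.mem_span_singleton.2 ⟨c, congrArg Subtype.val hc⟩

theorem card_erase_zero (n : ℕ) : (#(univ.erase (0 : PV n)) : ℝ) = (2 ^ n) ^ 2 - 1 := by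
  rw [cast_card_erase_of_mem (mem_univ _), card_univ, card_PV]
  push_cast
  rfl

theorem average_minorityFrac_eq (hn : 1 ≤ n) :
    (1 / (Nat.card (Lset n 1) : ℝ)) *
        ∑ᶠ w ∈ Lset n 1, minorityFrac n f w * (1 - minorityFrac n f w) =
      1 / 4 - (∑ v ∈ univ.erase 0, bias f v ^ 2) / (4 * ((2 ^ n) ^ 2 - 1)) := by
  have hbij := bijOn_span_singleton_Lset_one n
  have hcard : (Nat.card (Lset n 1) : ℝ) = (2 ^ n) ^ 2 - 1 := by
    rw [← card_erase_zero, ← Nat.card_congr hbij.equiv, Nat.card_coe_set_eq, Set.ncard_coe_finset]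
  have hne : ((2 : ℝ) ^ n) ^ 2 - 1 ≠ 0 :=
    (sub_pos.2 (one_lt_pow₀ (one_lt_pow₀ one_lt_two (by lia)) two_ne_zero)).ne'
  rw [← finsum_mem_eq_of_bijOn (f := fun v : PV n ↦ (1 - bias f v ^ 2) / 4) _ hbij
      fun v hv ↦ (minorityFrac_mul_one_sub_eq (ne_of_mem_erase hv)).symm,
    finsum_mem_coe_finset, hcard, ← sum_div, sum_sub_distrib, sum_const, nsmul_one,
    card_erase_zero]
  field_simp

theorem sum_erase_zero_sq_bias_le : ∑ v ∈ univ.erase 0, bias f v ^ 2 ≤ (2 ^ n) ^ 2 - 1 := by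
  rw [← card_erase_zero, ← nsmul_one]
  exact sum_le_card_nsmul _ _ _ fun v _ ↦ (sq_le_one_iff_abs_le_one _).2 (abs_bias_le_one v)

theorem mul_two_pow_pow_three_mul_le (hn : 6 ≤ n) :
    71 * ((2 : ℝ) ^ n) ^ 3 * (2 ^ n + 1) ^ 4 ≤ ((9 / 10) ^ n * (4 * ((2 ^ n) ^ 2 - 1))) ^ 4 := by
  have hbase : (71 : ℝ) ≤ 16 * (2 ^ n * ((9 / 10) ^ n) ^ 4) := by
    calc (71 : ℝ) ≤ 16 * (2 * (9 / 10) ^ 4) ^ 6 := by norm_num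
      _ ≤ 16 * (2 * (9 / 10) ^ 4) ^ n := by
          gcongr
          norm_num
      _ = 16 * (2 ^ n * ((9 / 10) ^ n) ^ 4) := by rw [mul_pow, pow_right_comm]
  have hy : (2 : ℝ) ≤ 2 ^ n := le_self_pow₀ one_le_two (by lia)
  generalize (2 : ℝ) ^ n = y at *
  generalize (9 / 10 : ℝ) ^ n = e at *
  calc 71 * y ^ 3 * (y + 1) ^ 4
      ≤ 16 * (y * e ^ 4) * y ^ 3 * (y + 1) ^ 4 := by gcongr
    _ = 256 * e ^ 4 * (y / 2) ^ 4 * (y + 1) ^ 4 := by ring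
    _ ≤ 256 * e ^ 4 * (y - 1) ^ 4 * (y + 1) ^ 4 := by
        gcongr
        linarith
    _ = (e * (4 * (y ^ 2 - 1))) ^ 4 := by ring

theorem sum_erase_zero_sq_bias_le_geometric (hf : ∀ S ∈ Lset n n, IsOutcome S (f S)) :
    ∑ v ∈ univ.erase 0, bias f v ^ 2 ≤ (9 / 10) ^ n * (4 * ((2 ^ n) ^ 2 - 1)) := by
  have hcard : (0 : ℝ) ≤ (2 ^ n) ^ 2 - 1 := card_erase_zero n ▸ Nat.cast_nonneg _
  obtain hn | hn := le_total n 6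
  · have hpow : (1 / 4 : ℝ) ≤ (9 / 10) ^ n :=
      calc (1 / 4 : ℝ) ≤ (9 / 10) ^ 6 := by norm_num
        _ ≤ (9 / 10) ^ n := pow_le_pow_of_le_one (by norm_num) (by norm_num) hn
    nlinarith [sum_erase_zero_sq_bias_le (f := f)]
  · refine le_of_pow_le_pow_left₀ four_ne_zero (by positivity) ?_
    calc (∑ v ∈ univ.erase 0, bias f v ^ 2) ^ 4
        ≤ (∑ v, bias f v ^ 2) ^ 4 := by
          gcongr
          exact erase_subset _ _
      _ ≤ 71 * (2 ^ n) ^ 3 * (2 ^ n + 1) ^ 4 := sum_sq_bias_pow_four_le (by lia) hf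
      _ ≤ ((9 / 10) ^ n * (4 * ((2 ^ n) ^ 2 - 1))) ^ 4 := mul_two_pow_pow_three_mul_le hn

end Average

theorem cval_ge_quarter_general :
    ∃ ε : ℝ, ε ∈ Set.Ioo (0 : ℝ) 1 ∧ ∀ n : ℕ, 1 ≤ n →
      ∀ f : (S : Submodule F2 (PV n)) → (S → F2),
        (∀ S ∈ Lset n n, IsOutcome S (f S)) →
        (1 / (Nat.card (Lset n 1) : ℝ)) *
            ∑ᶠ w ∈ Lset n 1, minorityFrac n f w * (1 - minorityFrac n f w)
          ≥ 1 / 4 - ε ^ n := by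
  refine ⟨9 / 10, by norm_num, fun n hn f hf ↦ ?_⟩
  have hpos : (0 : ℝ) < 4 * ((2 ^ n) ^ 2 - 1) :=
    mul_pos four_pos (sub_pos.2 (one_lt_pow₀ (one_lt_pow₀ one_lt_two (by lia)) two_ne_zero))
  rw [average_minorityFrac_eq hn]
  exact sub_le_sub_left ((div_le_iff₀ hpos).2 (sum_erase_zero_sq_bias_le_geometric hf)) _

/-- **Inconsistency bound.** There is `ε ∈ (0,1)` such that for every even `n ≥ 2` and every
contextual hidden variable assignment (a family of outcomes on all maximal isotropic
subspaces of `F2^{2n}`), the average over `w ∈ L^n_1` of `m_w(1 − m_w)` is at least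
`1/4 − ε^n`. -/
theorem cval_ge_quarter :
    ∃ ε : ℝ, ε ∈ Set.Ioo (0 : ℝ) 1 ∧ ∀ n : ℕ, Even n → 2 ≤ n →
      ∀ f : (S : Submodule F2 (PV n)) → (S → F2),
        (∀ S ∈ Lset n n, IsOutcome S (f S)) →
        (1 / (Nat.card (Lset n 1) : ℝ)) *
            ∑ᶠ w ∈ Lset n 1, minorityFrac n f w * (1 - minorityFrac n f w)
          ≥ 1 / 4 - ε ^ n := by
  obtain ⟨ε, hε, h⟩ := cval_ge_quarter_general
  exact ⟨ε, hε, fun n _ hn ↦ h n (one_le_two.trans hn)⟩
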